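/- Let a, b, b' be complex numbers with b + b' not a nonpositive integer, and let x, y be real numbers with |x| < 1 and |y| < 1 such that |(x−y)/(1−y)| < 1. Then F₁(a; b, b'; b+b'; x, y) = (1−y)^{−a} · ₂F₁(a, b; b+b'; (x−y)/(1−y)). -/

import Mathlib

noncomputable def poch (a : ℂ) (n : ℕ) : ℂ := ∏ i ∈ Finset.range n, (a + i)

/-- Gauss hypergeometric series ₂F₁(a,b;c;x). -/
noncomputable def hyp2F1 (a b c x : ℂ) : ℂ :=
  ∑' n : ℕ, poch a n * poch b n / (n.factorial * poch c n) * x ^ n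

/-- Appell series F₁(a;b,b';c;x,y). -/
noncomputable def appellF1 (a b b' c x y : ℂ) : ℂ :=
  ∑' p : ℕ × ℕ, poch a (p.1 + p.2) * poch b p.1 * poch b' p.2 /
    (p.1.factorial * p.2.factorial * poch c (p.1 + p.2)) * x ^ p.1 * y ^ p.2

open Filter Topology Finset

lemma poch_succ (a : ℂ) (n : ℕ) : poch a (n + 1) = (a + n) * poch a n := by
  simp [poch, Finset.prod_range_succ, mul_comm]

lemma poch_zero (a : ℂ) : poch a 0 = 1 := by simp [poch]

lemma poch_add (a : ℂ) (n k : ℕ) : poch a (n + k) = poch a n * poch (a + n) k := by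
  induction k with
  | zero => simp [poch_zero]
  | succ k ih => rw [← add_assoc, poch_succ, ih, poch_succ]; push_cast; ring

lemma poch_succ' (a : ℂ) (n : ℕ) : poch a (n + 1) = a * poch (a + 1) n := by
  rw [add_comm n 1, poch_add, poch_succ, poch_zero]; simp

lemma poch_ne_zero {c : ℂ} (hc : ∀ n : ℕ, c ≠ -(n : ℂ)) (n : ℕ) : poch c n ≠ 0 := by
  rw [poch, Finset.prod_ne_zero_iff]
  intro i _ h
  exact hc i (eq_neg_of_add_eq_zero_left h)

lemma poch_ascPochhammer (a : ℂ) (n : ℕ) : (ascPochhammer ℂ n).eval a = poch a n := by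
  induction n with
  | zero => simp [poch_zero]
  | succ n ih => rw [ascPochhammer_succ_eval, ih, poch_succ, mul_comm]

lemma choose_poch (a : ℂ) (n : ℕ) : Ring.choose (a + n - 1) n = poch a n / n.factorial := by
  rw [eq_div_iff (by exact_mod_cast n.factorial_ne_zero)]
  have h := Ring.factorial_nsmul_multichoose_eq_ascPochhammer a n
  rw [Ring.choose, show a + n - 1 - n + 1 = a by ring, mul_comm, ← nsmul_eq_mul, h,
    ← poch_ascPochhammer]
  simp [Polynomial.ascPochhammer_smeval_eq_eval]

lemma binom_series (a y : ℂ) (hy : ‖y‖ < 1) :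
    HasSum (fun k : ℕ => poch a k / k.factorial * y ^ k) ((1 - y) ^ (-a)) := by
  have h := (Complex.one_div_one_sub_cpow_hasFPowerSeriesOnBall_zero a).hasSum (y := y)
    (by simpa [Metric.mem_eball, edist_zero_right, ← ofReal_norm] using hy)
  simpa [choose_poch, Complex.cpow_neg, mul_comm] using h

lemma growth_aux (u q : ℕ → ℂ) (hu : ∀ n, u (n + 1) = q n * u n)
    (hq : Tendsto q atTop (𝓝 1)) (ρ : ℝ) (hρ : 1 < ρ) :
    ∃ C : ℝ, 0 < C ∧ ∀ n, ‖u n‖ ≤ C * ρ ^ n := by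
  obtain ⟨r, hr1, hrρ⟩ := exists_between hρ
  have hρ0 : 0 < ρ := by linarith
  have hq' : ∀ᶠ n in atTop, ‖q n‖ < r := by
    have := hq.norm
    rw [norm_one] at this
    exact this.eventually_lt_const hr1
  have hs : Summable (fun n => u n / (ρ : ℂ) ^ n) := by
    refine summable_of_ratio_norm_eventually_le (r := r / ρ) ((div_lt_one hρ0).2 hrρ) ?_
    filter_upwards [hq'] with n hn
    rw [hu, norm_div, norm_mul, norm_div, norm_pow, norm_pow, Complex.norm_real,
      Real.norm_of_nonneg hρ0.le, pow_succ, div_mul_div_comm, mul_comm (ρ ^ n)]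
    gcongr
  obtain ⟨C, hC⟩ := (hs.tendsto_atTop_zero.norm.isBoundedUnder_le).bddAbove_range
  refine ⟨max C 1, by positivity, fun n => ?_⟩
  have := hC ⟨n, rfl⟩
  simp only [norm_div, norm_pow, Complex.norm_real, Real.norm_of_nonneg hρ0.le] at this
  rw [div_le_iff₀ (by positivity)] at this
  exact this.trans (by gcongr; exact le_max_left _ _)

lemma tendsto_q (α : ℂ) : Tendsto (fun n : ℕ => (α + n) / ((n : ℂ) + 1)) atTop (𝓝 1) := by
  have h := ((tendsto_one_div_add_atTop_nhds_zero_nat (𝕜 := ℂ)).const_mul (α - 1)).const_add 1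
  simp only [mul_zero, add_zero] at h
  refine h.congr fun n => ?_
  have : (n : ℂ) + 1 ≠ 0 := by exact_mod_cast n.succ_ne_zero
  field_simp
  ring

lemma growth_poch (α : ℂ) (ρ : ℝ) (hρ : 1 < ρ) :
    ∃ C : ℝ, 0 < C ∧ ∀ n, ‖poch α n‖ ≤ C * ρ ^ n * n.factorial := by
  obtain ⟨C, hC, h⟩ := growth_aux (fun n => poch α n / n.factorial) _ (fun n => by
    rw [poch_succ, Nat.factorial_succ]; push_cast; rw [div_mul_div_comm]) (tendsto_q α) ρ hρ
  refine ⟨C, hC, fun n => ?_⟩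
  have := h n
  rwa [norm_div, Complex.norm_natCast, div_le_iff₀ (by positivity)] at this

lemma growth_inv_poch {c : ℂ} (ρ : ℝ) (hρ : 1 < ρ) :
    ∃ C : ℝ, 0 < C ∧ ∀ n : ℕ, n.factorial * ‖poch c n‖⁻¹ ≤ C * ρ ^ n := by
  obtain ⟨C, hC, h⟩ := growth_aux (fun n => n.factorial * (poch c n)⁻¹)
    (fun n => ((c + n) / ((n : ℂ) + 1))⁻¹) (fun n => by
    rw [poch_succ, Nat.factorial_succ]; push_cast; rw [inv_div, mul_inv]; ring)
    (by simpa using (tendsto_q c).inv₀ one_ne_zero) ρ hρ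
  refine ⟨C, hC, fun n => ?_⟩
  simpa using h n

lemma sum_antidiagonal_identity (N : ℕ) : ∀ (b b' X Y : ℂ),
    ∑ p ∈ antidiagonal N, (N.choose p.1 : ℂ) * (poch b p.1 * poch b' p.2 * X ^ p.1 * Y ^ p.2) =
    ∑ p ∈ antidiagonal N, (N.choose p.1 : ℂ) *
      (poch b p.1 * poch (b + b' + p.1) p.2 * (X - Y) ^ p.1 * Y ^ p.2) := by
  induction N with
  | zero => intro b b' X Y; simp [poch_zero]
  | succ N ih =>
    intro b b' X Y
    rw [Finset.sum_antidiagonal_choose_succ_mul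
      (fun i j => poch b i * poch b' j * X ^ i * Y ^ j),
      Finset.sum_antidiagonal_choose_succ_mul
      (fun i j => poch b i * poch (b + b' + i) j * (X - Y) ^ i * Y ^ j)]
    have hsym : ∀ p ∈ antidiagonal N, (N.choose p.2 : ℂ) = N.choose p.1 := by
      intro p hp
      rw [← mem_antidiagonal.1 hp, Nat.choose_symm_add]
    have e1 : ∑ p ∈ antidiagonal N, (N.choose p.1 : ℂ) *
        (poch b p.1 * poch b' (p.2 + 1) * X ^ p.1 * Y ^ (p.2 + 1)) =
        b' * Y * ∑ p ∈ antidiagonal N, (N.choose p.1 : ℂ) *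
          (poch b p.1 * poch (b' + 1) p.2 * X ^ p.1 * Y ^ p.2) := by
      rw [mul_sum]
      refine sum_congr rfl fun p _ => ?_
      rw [poch_succ']; ring
    have e2 : ∑ p ∈ antidiagonal N, (N.choose p.2 : ℂ) *
        (poch b (p.1 + 1) * poch b' p.2 * X ^ (p.1 + 1) * Y ^ p.2) =
        b * X * ∑ p ∈ antidiagonal N, (N.choose p.1 : ℂ) *
          (poch (b + 1) p.1 * poch b' p.2 * X ^ p.1 * Y ^ p.2) := by
      rw [mul_sum]
      refine sum_congr rfl fun p hp => ?_
      rw [poch_succ', hsym p hp]; ring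
    rw [e1, e2, ih, ih, mul_sum, mul_sum, ← sum_add_distrib, ← sum_add_distrib]
    refine sum_congr rfl fun p hp => ?_
    rw [hsym p hp, poch_succ' (b + b' + p.1)]
    have h1 : b * poch (b + 1) p.1 = (b + p.1) * poch b p.1 := by
      rw [← poch_succ', poch_succ]
    rw [poch_succ' b]
    rw [show b + (b' + 1) + (p.1 : ℂ) = b + b' + p.1 + 1 by ring,
      show b + 1 + b' + (p.1 : ℂ) = b + b' + p.1 + 1 by ring,
      show b + b' + ((p.1 + 1 : ℕ) : ℂ) = b + b' + p.1 + 1 by push_cast; ring]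
    linear_combination ((N.choose p.1 : ℂ) * poch (b + b' + p.1 + 1) p.2 * (X - Y) ^ p.1 * Y ^ p.2
      * Y) * h1

lemma tsum_antidiag (f : ℕ × ℕ → ℂ) (hf : Summable f) :
    ∑' p, f p = ∑' N : ℕ, ∑ p ∈ antidiagonal N, f p := by
  rw [← Finset.HasAntidiagonal.sigmaAntidiagonalEquivProd.tsum_eq]
  change ∑' c, (f ∘ Finset.HasAntidiagonal.sigmaAntidiagonalEquivProd) c = _
  rw [Summable.tsum_sigma' (fun n => (hasSum_fintype _).summable)
    ((Finset.HasAntidiagonal.sigmaAntidiagonalEquivProd).summable_iff.2 hf)]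
  refine tsum_congr fun n => ?_
  rw [tsum_fintype]
  exact Finset.sum_coe_sort (antidiagonal n) f

lemma exists_rho (M : ℝ) (hM : M < 1) : ∃ ρ : ℝ, 1 < ρ ∧ ρ ^ 3 * M < 1 := by
  have h : Tendsto (fun ρ : ℝ => ρ ^ 3 * M) (𝓝[>] 1) (𝓝 (1 ^ 3 * M)) :=
    (Continuous.tendsto (by fun_prop) _).mono_left nhdsWithin_le_nhds
  have h2 := (h.eventually_lt_const (by simpa using hM)).and
    (self_mem_nhdsWithin : Set.Ioi (1 : ℝ) ∈ 𝓝[>] 1)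
  obtain ⟨ρ, h1, h2⟩ := h2.exists
  exact ⟨ρ, h2, h1⟩

lemma summable_geom_prod (r s K : ℝ) (hr0 : 0 ≤ r) (hs0 : 0 ≤ s) (hr : r < 1) (hs : s < 1) :
    Summable (fun p : ℕ × ℕ => K * (r ^ p.1 * s ^ p.2)) :=
  ((summable_geometric_of_lt_one hr0 hr).mul_of_nonneg (summable_geometric_of_lt_one hs0 hs)
    (fun _ => by simp only [Pi.zero_apply]; positivity)
    (fun _ => by simp only [Pi.zero_apply]; positivity)).mul_left K

lemma summable_F1 (a b b' c : ℂ) (r s : ℝ) (hr0 : 0 ≤ r) (hs0 : 0 ≤ s) (hr : r < 1)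
    (hs : s < 1) :
    Summable (fun p : ℕ × ℕ => ‖poch a (p.1 + p.2) * poch b p.1 * poch b' p.2 /
      (p.1.factorial * p.2.factorial * poch c (p.1 + p.2))‖ * r ^ p.1 * s ^ p.2) := by
  obtain ⟨ρ, hρ, hM⟩ := exists_rho (max r s) (max_lt hr hs)
  have hρ0 : 0 < ρ := by linarith
  have hr' : ρ ^ 3 * r < 1 := lt_of_le_of_lt (by gcongr; exact le_max_left _ _) hM
  have hs' : ρ ^ 3 * s < 1 := lt_of_le_of_lt (by gcongr; exact le_max_right _ _) hM
  obtain ⟨A, hA, ha⟩ := growth_poch a ρ hρ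
  obtain ⟨B, hB, hb⟩ := growth_poch b ρ hρ
  obtain ⟨B', hB', hb'⟩ := growth_poch b' ρ hρ
  obtain ⟨C, hC, hc⟩ := growth_inv_poch (c := c) ρ hρ
  refine Summable.of_nonneg_of_le (fun p => by positivity) (fun p => ?_)
    (summable_geom_prod (ρ ^ 3 * r) (ρ ^ 3 * s) (A * B * B' * C) (by positivity) (by positivity)
      hr' hs')
  obtain ⟨m, n⟩ := p
  simp only [norm_div, norm_mul, Complex.norm_natCast]
  have hm0 : (0 : ℝ) < m.factorial := by positivity
  have hn0 : (0 : ℝ) < n.factorial := by positivity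
  have hN0 : (0 : ℝ) < (m + n).factorial := by positivity
  have hc' : ‖poch c (m + n)‖⁻¹ ≤ C * ρ ^ (m + n) / (m + n).factorial := by
    rw [le_div_iff₀ hN0, mul_comm]; exact hc _
  calc ‖poch a (m + n)‖ * ‖poch b m‖ * ‖poch b' n‖ /
        (m.factorial * n.factorial * ‖poch c (m + n)‖) * r ^ m * s ^ n
      = ‖poch a (m + n)‖ * ‖poch b m‖ * ‖poch b' n‖ * ‖poch c (m + n)‖⁻¹ *
        (((m.factorial : ℝ))⁻¹ * ((n.factorial : ℝ))⁻¹ * (r ^ m * s ^ n)) := by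
        rw [div_eq_mul_inv, mul_inv, mul_inv]; ring
    _ ≤ (A * ρ ^ (m + n) * (m + n).factorial) * (B * ρ ^ m * m.factorial) *
        (B' * ρ ^ n * n.factorial) * (C * ρ ^ (m + n) / (m + n).factorial) *
        (((m.factorial : ℝ))⁻¹ * ((n.factorial : ℝ))⁻¹ * (r ^ m * s ^ n)) := by
        gcongr
        · exact ha _
        · exact hb _
        · exact hb' _
    _ = _ := by
        field_simp
        rw [mul_pow, mul_pow, ← pow_mul, ← pow_mul]
        ring

lemma summable_H (a b c X Y : ℂ) (hX : ‖X‖ < 1 / 16) (hY : ‖Y‖ < 1 / 16) :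
    Summable (fun p : ℕ × ℕ => poch a (p.1 + p.2) * poch b p.1 /
      (p.1.factorial * p.2.factorial * poch c p.1) * X ^ p.1 * Y ^ p.2) := by
  obtain ⟨A, hA, ha⟩ := growth_poch a 2 (by norm_num)
  obtain ⟨B, hB, hb⟩ := growth_poch b 2 (by norm_num)
  obtain ⟨C, hC, hc⟩ := growth_inv_poch (c := c) 2 (by norm_num)
  refine Summable.of_norm_bounded
    (summable_geom_prod (16 * ‖X‖) (16 * ‖Y‖) (A * B * C) (by positivity) (by positivity)
      (by linarith) (by linarith)) (fun p => ?_)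
  obtain ⟨m, n⟩ := p
  simp only [norm_div, norm_mul, norm_pow, Complex.norm_natCast]
  have hm0 : (0 : ℝ) < m.factorial := by positivity
  have hn0 : (0 : ℝ) < n.factorial := by positivity
  have hc' : ‖poch c m‖⁻¹ ≤ C * 2 ^ m / m.factorial := by
    rw [le_div_iff₀ hm0, mul_comm]; exact hc _
  have hch : ((m + n).factorial : ℝ) ≤ 2 ^ (m + n) * m.factorial * n.factorial := by
    rw [← Nat.add_choose_mul_factorial_mul_factorial m n]
    push_cast
    gcongr
    exact_mod_cast Nat.choose_le_two_pow (m + n) n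
  calc ‖poch a (m + n)‖ * ‖poch b m‖ /
        (m.factorial * n.factorial * ‖poch c m‖) * ‖X‖ ^ m * ‖Y‖ ^ n
      = ‖poch a (m + n)‖ * ‖poch b m‖ * ‖poch c m‖⁻¹ *
        (((m.factorial : ℝ))⁻¹ * ((n.factorial : ℝ))⁻¹ * (‖X‖ ^ m * ‖Y‖ ^ n)) := by
        rw [div_eq_mul_inv, mul_inv, mul_inv]; ring
    _ ≤ (A * 2 ^ (m + n) * (2 ^ (m + n) * m.factorial * n.factorial)) *
        (B * 2 ^ m * m.factorial) * (C * 2 ^ m / m.factorial) *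
        (((m.factorial : ℝ))⁻¹ * ((n.factorial : ℝ))⁻¹ * (‖X‖ ^ m * ‖Y‖ ^ n)) := by
        gcongr
        · exact (ha _).trans (by gcongr)
        · exact hb _
    _ = A * B * C * ((16 ^ m * ‖X‖ ^ m) * (4 ^ n * ‖Y‖ ^ n)) := by
        field_simp
        have e16 : (16 : ℝ) ^ m = 2 ^ (m * 4) := by rw [mul_comm, pow_mul]; norm_num
        have e4 : (4 : ℝ) ^ n = 2 ^ (n * 2) := by rw [mul_comm, pow_mul]; norm_num
        rw [e16, e4]
        ring
    _ ≤ A * B * C * ((16 ^ m * ‖X‖ ^ m) * (16 ^ n * ‖Y‖ ^ n)) := by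
        gcongr; norm_num
    _ = _ := by rw [mul_pow, mul_pow]

lemma summable_gauss (a b c : ℂ) (r : ℝ) (hr0 : 0 ≤ r) (hr : r < 1) :
    Summable (fun n : ℕ => ‖poch a n * poch b n / (n.factorial * poch c n)‖ * r ^ n) := by
  obtain ⟨ρ, hρ, hM⟩ := exists_rho r hr
  have hρ0 : 0 < ρ := by linarith
  obtain ⟨A, hA, ha⟩ := growth_poch a ρ hρ
  obtain ⟨B, hB, hb⟩ := growth_poch b ρ hρ
  obtain ⟨C, hC, hc⟩ := growth_inv_poch (c := c) ρ hρ
  refine Summable.of_nonneg_of_le (fun p => by positivity) (fun m => ?_)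
    ((summable_geometric_of_lt_one (r := ρ ^ 3 * r) (by positivity) hM).mul_left (A * B * C))
  simp only [norm_div, norm_mul, Complex.norm_natCast]
  have hm0 : (0 : ℝ) < m.factorial := by positivity
  have hc' : ‖poch c m‖⁻¹ ≤ C * ρ ^ m / m.factorial := by
    rw [le_div_iff₀ hm0, mul_comm]; exact hc _
  calc ‖poch a m‖ * ‖poch b m‖ / (m.factorial * ‖poch c m‖) * r ^ m
      = ‖poch a m‖ * ‖poch b m‖ * ‖poch c m‖⁻¹ * (((m.factorial : ℝ))⁻¹ * r ^ m) := by
        rw [div_eq_mul_inv, mul_inv]; ring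
    _ ≤ (A * ρ ^ m * m.factorial) * (B * ρ ^ m * m.factorial) *
        (C * ρ ^ m / m.factorial) * (((m.factorial : ℝ))⁻¹ * r ^ m) := by
        gcongr
        · exact ha _
        · exact hb _
    _ = _ := by
        field_simp
        rw [mul_pow, ← pow_mul]
        ring

lemma analyticAt_gauss (a b c z : ℂ) (hz : ‖z‖ < 1) : AnalyticAt ℂ (hyp2F1 a b c) z := by
  obtain ⟨r, hzr, hr⟩ := exists_between hz
  have hr0 : 0 ≤ r := (norm_nonneg z).trans hzr.le
  have h := Complex.differentiableOn_tsum_of_summable_norm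
    (F := fun (n : ℕ) (w : ℂ) => poch a n * poch b n / (n.factorial * poch c n) * w ^ n)
    (U := Metric.ball 0 r) (summable_gauss a b c r hr0 hr) (fun n => by fun_prop)
    Metric.isOpen_ball (fun n w hw => by
      rw [norm_mul, norm_pow]
      have : ‖w‖ ≤ r := by simpa using (mem_ball_zero_iff.1 hw).le
      gcongr)
  exact (h.analyticOnNhd Metric.isOpen_ball) z (by simpa using hzr)

lemma analyticAt_F1 (a b b' c x y t : ℂ) (hx : ‖x‖ < 1) (hy : ‖y‖ < 1) (ht : ‖t‖ ≤ 1) :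
    AnalyticAt ℂ (fun t => appellF1 a b b' c (t * x) (t * y)) t := by
  obtain ⟨R, hR, hM⟩ := exists_rho (max ‖x‖ ‖y‖) (max_lt hx hy)
  have hR0 : 0 < R := by linarith
  have hRR : R ≤ R ^ 3 := le_self_pow₀ hR.le (by norm_num)
  have hx' : R * ‖x‖ < 1 := lt_of_le_of_lt (by gcongr; exact le_max_left _ _) hM
  have hy' : R * ‖y‖ < 1 := lt_of_le_of_lt (by gcongr; exact le_max_right _ _) hM
  have h := Complex.differentiableOn_tsum_of_summable_norm
    (F := fun (p : ℕ × ℕ) (t : ℂ) => poch a (p.1 + p.2) * poch b p.1 * poch b' p.2 /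
      (p.1.factorial * p.2.factorial * poch c (p.1 + p.2)) * (t * x) ^ p.1 * (t * y) ^ p.2)
    (U := Metric.ball 0 R) (summable_F1 a b b' c (R * ‖x‖) (R * ‖y‖) (by positivity)
      (by positivity) hx' hy') (fun n => by fun_prop)
    Metric.isOpen_ball (fun n w hw => by
      rw [norm_mul, norm_mul, norm_pow, norm_pow, norm_mul w, norm_mul w]
      have : ‖w‖ ≤ R := by simpa using (mem_ball_zero_iff.1 hw).le
      gcongr)
  exact (h.analyticOnNhd Metric.isOpen_ball) t (by simpa using ht.trans_lt hR)

lemma local_identity (a b b' X Y : ℂ) (hc : ∀ n : ℕ, b + b' ≠ -(n : ℂ))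
    (hX : ‖X‖ < 1) (hY : ‖Y‖ < 1 / 16) (hXY : ‖X - Y‖ < 1 / 16) :
    appellF1 a b b' (b + b') X Y =
      (1 - Y) ^ (-a) * hyp2F1 a b (b + b') ((X - Y) / (1 - Y)) := by
  have hY1 : ‖Y‖ < 1 := by linarith
  have h1Y : (1 : ℂ) - Y ≠ 0 := by
    intro h
    rw [← sub_eq_zero.1 h] at hY1
    simp at hY1
  have hR : (1 - Y) ^ (-a) * hyp2F1 a b (b + b') ((X - Y) / (1 - Y)) =
      ∑' p : ℕ × ℕ, poch a (p.1 + p.2) * poch b p.1 /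
        (p.1.factorial * p.2.factorial * poch (b + b') p.1) * (X - Y) ^ p.1 * Y ^ p.2 := by
    rw [(summable_H a b (b + b') (X - Y) Y hXY hY).tsum_prod, hyp2F1, ← tsum_mul_left]
    refine tsum_congr fun n => ?_
    have e : (1 - Y) ^ (-a) / (1 - Y) ^ n =
        ∑' k : ℕ, poch (a + n) k / k.factorial * Y ^ k := by
      rw [(binom_series (a + n) Y hY1).tsum_eq, neg_add', Complex.cpow_sub _ _ h1Y,
        Complex.cpow_natCast]
    have e2 : (1 - Y) ^ (-a) * (poch a n * poch b n / (n.factorial * poch (b + b') n) *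
        ((X - Y) / (1 - Y)) ^ n) = poch a n * poch b n / (n.factorial * poch (b + b') n) *
        (X - Y) ^ n * ((1 - Y) ^ (-a) / (1 - Y) ^ n) := by
      rw [div_pow]; ring
    rw [e2, e, ← tsum_mul_left]
    refine tsum_congr fun k => ?_
    rw [poch_add]
    simp only [div_eq_mul_inv, mul_inv]
    ring
  rw [hR, tsum_antidiag _ (summable_H a b (b + b') (X - Y) Y hXY hY), appellF1, tsum_antidiag]
  · refine tsum_congr fun N => ?_
    have hid := congrArg (fun z => poch a N / (N.factorial * poch (b + b') N) * z)
      (sum_antidiagonal_identity N b b' X Y)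
    simp only [mul_sum] at hid
    have hch : ∀ p ∈ antidiagonal N,
        ((N.choose p.1 : ℂ)) = N.factorial / (p.1.factorial * p.2.factorial) := by
      intro p hp
      rw [← mem_antidiagonal.1 hp, Nat.choose_symm_add, eq_div_iff (mul_ne_zero
        (by exact_mod_cast p.1.factorial_ne_zero) (by exact_mod_cast p.2.factorial_ne_zero)),
        ← mul_assoc]
      exact_mod_cast Nat.add_choose_mul_factorial_mul_factorial p.1 p.2
    have hN : (N.factorial : ℂ) ≠ 0 := by exact_mod_cast N.factorial_ne_zero
    refine (sum_congr rfl fun p hp => ?_).trans (hid.trans (sum_congr rfl fun p hp => ?_))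
    · have h1 : (p.1.factorial : ℂ) ≠ 0 := by exact_mod_cast p.1.factorial_ne_zero
      have h2 : (p.2.factorial : ℂ) ≠ 0 := by exact_mod_cast p.2.factorial_ne_zero
      have h3 := poch_ne_zero hc N
      rw [hch p hp, mem_antidiagonal.1 hp]
      field_simp
    · have h1 : (p.1.factorial : ℂ) ≠ 0 := by exact_mod_cast p.1.factorial_ne_zero
      have h2 : (p.2.factorial : ℂ) ≠ 0 := by exact_mod_cast p.2.factorial_ne_zero
      have h3 := poch_ne_zero hc N
      have h4 : poch (b + b') N = poch (b + b') p.1 * poch (b + b' + p.1) p.2 := by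
        rw [← poch_add, mem_antidiagonal.1 hp]
      rw [h4] at h3
      have h5 := left_ne_zero_of_mul h3
      have h6 := right_ne_zero_of_mul h3
      rw [hch p hp, mem_antidiagonal.1 hp, h4]
      field_simp
  · refine Summable.of_norm ((summable_F1 a b b' (b + b') ‖X‖ ‖Y‖ (norm_nonneg _)
      (norm_nonneg _) hX hY1).congr fun p => ?_)
    rw [norm_mul, norm_mul, norm_pow, norm_pow]

theorem appellF1_reduction_c_eq_b_add_b' (a b b' : ℂ) (x y : ℝ)
    (hbb' : ∀ n : ℕ, b + b' ≠ -(n : ℂ))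
    (hx : |x| < 1) (hy : |y| < 1) (hxy : |(x - y) / (1 - y)| < 1) :
    appellF1 a b b' (b + b') x y =
      ((1 : ℂ) - y) ^ (-a) * hyp2F1 a b (b + b') (((x : ℂ) - y) / (1 - y)) := by
  obtain ⟨hx1, hx2⟩ := abs_lt.1 hx
  obtain ⟨hy1, hy2⟩ := abs_lt.1 hy
  have hxy1 : 2 * y - x < 1 := by
    have h := (abs_lt.1 hxy).1
    rw [lt_div_iff₀ (by linarith)] at h
    linarith
  have key : Set.EqOn (fun t : ℂ => appellF1 a b b' (b + b') (t * x) (t * y))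
      (fun t : ℂ => (1 - t * y) ^ (-a) * hyp2F1 a b (b + b') ((t * x - t * y) / (1 - t * y)))
      (Complex.ofReal '' Set.Icc 0 1) := by
    refine AnalyticOnNhd.eqOn_of_preconnected_of_eventuallyEq (𝕜 := ℂ) (z₀ := 0) ?_ ?_ ?_ ?_ ?_
    · rintro _ ⟨t, ⟨ht0, ht1⟩, rfl⟩
      refine analyticAt_F1 a b b' (b + b') x y t (by simpa using hx) (by simpa using hy) ?_
      simpa [abs_of_nonneg ht0] using ht1
    · rintro _ ⟨t, ⟨ht0, ht1⟩, rfl⟩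
      have hpos : 0 < 1 - t * y := by nlinarith
      have e1 : (1 : ℂ) - t * y = ((1 - t * y : ℝ) : ℂ) := by push_cast; ring
      have hne : (1 : ℂ) - t * y ≠ 0 := by
        rw [e1]; exact_mod_cast hpos.ne'
      have hlin : AnalyticAt ℂ (fun t : ℂ => (1 : ℂ) - t * y) (t : ℂ) := by fun_prop
      refine AnalyticAt.mul ?_ ?_
      · refine hlin.cpow analyticAt_const ?_
        rw [e1]
        exact Complex.ofReal_mem_slitPlane.2 hpos
      · refine AnalyticAt.fun_comp (g := hyp2F1 a b (b + b'))
          (f := fun t : ℂ => (t * x - t * y) / (1 - t * y)) ?_ ?_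
        · apply analyticAt_gauss
          rw [show ((t : ℂ) * x - t * y) / (1 - t * y) =
            (((t * x - t * y) / (1 - t * y) : ℝ) : ℂ) by push_cast; ring,
            Complex.norm_real, Real.norm_eq_abs, abs_lt, lt_div_iff₀ hpos, div_lt_iff₀ hpos]
          constructor <;> nlinarith
        · exact AnalyticAt.div (by fun_prop) hlin hne
    · exact isPreconnected_Icc.image _ Complex.continuous_ofReal.continuousOn
    · exact ⟨0, by simp, by simp⟩
    · have h1 : ∀ᶠ t : ℂ in 𝓝 0, ‖t * x‖ < 1 :=
        (Continuous.tendsto (f := fun t : ℂ => ‖t * (x : ℂ)‖) (by fun_prop) 0).eventually_lt_const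
          (by simp)
      have h2 : ∀ᶠ t : ℂ in 𝓝 0, ‖t * y‖ < 1 / 16 :=
        (Continuous.tendsto (f := fun t : ℂ => ‖t * (y : ℂ)‖) (by fun_prop) 0).eventually_lt_const
          (by simp)
      have h3 : ∀ᶠ t : ℂ in 𝓝 0, ‖t * x - t * y‖ < 1 / 16 :=
        (Continuous.tendsto (f := fun t : ℂ => ‖t * (x : ℂ) - t * y‖) (by fun_prop)
          0).eventually_lt_const (by simp)
      filter_upwards [h1, h2, h3] with t h1 h2 h3
      exact local_identity a b b' _ _ hbb' h1 h2 h3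
  have := key (x := 1) ⟨1, by simp, by simp⟩
  simpa using this
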